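/- arXiv:2006.11422 — 2 statements merged into one kernel-verified Lean document; each statement's English description precedes it below -/
import Mathlib

section
/- Let (Ω_n, μ_n), n ≥ 1, be probability spaces with measure-preserving semiflows g_{n,t} : Ω_n → Ω_n (g_{n,0} = id, g_{n,s+t} = g_{n,s}∘g_{n,t}, each g_{n,t} preserves μ_n, and (t,ω) ↦ g_{n,t}(ω) is jointly measurable for each n). Let λ_n be probability measures on Ω_n with λ_n ≪ μ_n and densities ρ_n = dλ_n/dμ_n. Let (B, d_B) be a metric space, R_n : Ω_n → B Borel measurable, and R a random element of B. Assume: (S1) sup_n ∫ ρ_n^{1+δ} dμ_n < ∞ for some δ > 0; (S2) for each t ≥ 0, d_B(R_n ∘ g_{n,t}, R_n) → 0 in μ_n-measure as n → ∞; (S3) inf_{t₁>0} limsup_{n→∞} ∫ | (1/t₁) ∫_0^{t₁} ρ_n ∘ g_{n,t} dt − 1 | dμ_n = 0. Then R_n →_{μ_n} R if and only if R_n →_{λ_n} R. -/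
open MeasureTheory Filter

noncomputable section

/-!
Distributional convergence may be tested on bounded Lipschitz functions, so it suffices to show
`∫ ψ(R' n) dλ_n - ∫ ψ(R' n) dμ_n → 0` for such `ψ`. Put `f = ψ ∘ R' n`. Invariance of `μ_n` gives
`∫ f ρ_n = ∫ (f ∘ g_t) (ρ_n ∘ g_t)` for every `t ≥ 0`; averaging over `t ∈ [0, T]`,

`∫ f ρ_n - ∫ f = T⁻¹ ∫_0^T ∫ (f ∘ g_t - f) (ρ_n ∘ g_t) dμ_n dt + ∫ f (T⁻¹ ∫_0^T ρ_n ∘ g_t dt - 1) dμ_n`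

(`abs_integral_density_sub_le`). The second term is small uniformly in large `n` by (S3), for a
suitable `T`. In the first, for each fixed `t`, the bounded functions `f ∘ g_t - f` tend to zero in
measure by (S2), while the `ρ_n ∘ g_t` are uniformly integrable by (S1), so the inner integral tends
to zero (`tendsto_integral_mul_zero`); dominated convergence in `t` then handles the average.

The function `x ↦ dist (R' n (g n t x)) (R' n x)` need not be measurable when `B` is not separable;
(S2) is only used through the measurable sets `{η ≤ |f ∘ g_t - f|}`, which are contained in its
superlevel sets.
-/

/-- Quantitative form of `tendsto_integral_mul_zero`, obtained by truncating `r` at level `M` and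
`h` at level `η`. -/
lemma integral_mul_le_of_rpow_bound {Ω : Type*} [MeasurableSpace Ω] (μ : Measure Ω)
    [IsProbabilityMeasure μ] {h r : Ω → ℝ} (hh : Measurable h) (hr : Measurable r)
    (hr0 : ∀ x, 0 ≤ r x) {c : ℝ} (hh0 : ∀ x, 0 ≤ h x) (hc : ∀ x, h x ≤ c)
    {δ K : ℝ} (hδ : 0 < δ) (hK : 0 ≤ K)
    (hr1 : ∫⁻ x, ENNReal.ofReal (r x) ^ (1 + δ) ∂μ ≤ ENNReal.ofReal K)
    {M η : ℝ} (hM : 0 < M) (hη : 0 < η) :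
    ∫ x, h x * r x ∂μ ≤ M * (η + c * μ.real {x | η ≤ h x}) + c * (K * M ^ (-δ)) := by
  have hc0 : 0 ≤ c := by
    obtain ⟨x⟩ : Nonempty Ω := μ.nonempty_of_neZero
    exact (hh0 x).trans (hc x)
  have hpow : ∀ x, ENNReal.ofReal (r x) ^ (1 + δ) = ENNReal.ofReal (r x ^ (1 + δ)) := fun x =>
    ENNReal.ofReal_rpow_of_nonneg (hr0 x) (by linarith)
  simp_rw [hpow] at hr1
  have hp0 : ∀ x, 0 ≤ r x ^ (1 + δ) := fun x => Real.rpow_nonneg (hr0 x) _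
  have hpm : Measurable fun x => r x ^ (1 + δ) := hr.pow_const _
  have hpi : Integrable (fun x => r x ^ (1 + δ)) μ :=
    ⟨hpm.aestronglyMeasurable, by
      rw [hasFiniteIntegral_iff_ofReal (ae_of_all _ hp0)]
      exact hr1.trans_lt ENNReal.ofReal_lt_top⟩
  have hpK : ∫ x, r x ^ (1 + δ) ∂μ ≤ K := by
    rw [integral_eq_lintegral_of_nonneg_ae (ae_of_all _ hp0) hpm.aestronglyMeasurable]
    exact ENNReal.toReal_le_of_le_ofReal hK hr1
  have hSm : MeasurableSet {x | η ≤ h x} := measurableSet_le measurable_const hh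
  -- Either `r ≤ M`, or `r = r ^ (1 + δ) * r ^ (-δ) ≤ r ^ (1 + δ) * M ^ (-δ)`.
  have hrle : ∀ x, r x ≤ M + r x ^ (1 + δ) * M ^ (-δ) := by
    intro x
    have hMδ : 0 ≤ M ^ (-δ) := Real.rpow_nonneg hM.le _
    rcases le_total (r x) M with h1 | h1
    · have := mul_nonneg (hp0 x) hMδ
      linarith
    · have hrpos : 0 < r x := hM.trans_le h1
      have h2 : r x ^ (-δ) ≤ M ^ (-δ) :=
        Real.rpow_le_rpow_of_nonpos hM h1 (by linarith)
      have h3 : r x ^ (1 + δ) * r x ^ (-δ) = r x := by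
        rw [← Real.rpow_add hrpos]; simp
      nlinarith [mul_le_mul_of_nonneg_left h2 (hp0 x)]
  have hind : ∀ x, h x ≤ η + c * ({x | η ≤ h x}.indicator (fun _ => (1 : ℝ)) x) := by
    intro x
    by_cases hx : η ≤ h x
    · simp only [Set.indicator, Set.mem_ofPred_eq, hx, if_true]
      linarith [hc x]
    · simp only [Set.indicator, Set.mem_ofPred_eq, hx, if_false]
      linarith
  have hii : Integrable ({x | η ≤ h x}.indicator (fun _ => (1 : ℝ))) μ :=
    (integrable_const 1).indicator hSm
  calc ∫ x, h x * r x ∂μ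
      ≤ ∫ x, M * (η + c * ({x | η ≤ h x}.indicator (fun _ => (1 : ℝ)) x))
          + c * (r x ^ (1 + δ) * M ^ (-δ)) ∂μ := by
        refine integral_mono_of_nonneg (ae_of_all _ fun x => mul_nonneg (hh0 x) (hr0 x)) ?_
          (ae_of_all _ fun x => ?_)
        · exact (((integrable_const η).add (hii.const_mul c)).const_mul M).add
            ((hpi.mul_const _).const_mul c)
        · have h1 := mul_le_mul_of_nonneg_left (hrle x) (hh0 x)
          have h2 := mul_le_mul_of_nonneg_left (hind x) hM.le
          have h3 := mul_le_mul_of_nonneg_right (hc x)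
            (mul_nonneg (hp0 x) (Real.rpow_nonneg hM.le (-δ)))
          dsimp only
          nlinarith
    _ = M * (η + c * μ.real {x | η ≤ h x}) + c * ((∫ x, r x ^ (1 + δ) ∂μ) * M ^ (-δ)) := by
        have hi : Integrable
            (fun x => M * (η + c * ({x | η ≤ h x}.indicator (fun _ => (1 : ℝ)) x))) μ :=
          ((integrable_const η).add (hii.const_mul c)).const_mul M
        rw [integral_add hi ((hpi.mul_const _).const_mul c), integral_const_mul, integral_const_mul,
          integral_mul_const, integral_add (integrable_const η) (hii.const_mul c),
          integral_const_mul, integral_indicator_const _ hSm]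
        simp
    _ ≤ _ := by gcongr

/-- If the `h n` are uniformly bounded and tend to zero in measure, and the `r n` are bounded in
`L^(1 + δ)`, then `∫ h n * r n` tends to zero. -/
lemma tendsto_integral_mul_zero {Ω : ℕ → Type*} [∀ n, MeasurableSpace (Ω n)]
    (μ : ∀ n, Measure (Ω n)) [∀ n, IsProbabilityMeasure (μ n)] {h r : ∀ n, Ω n → ℝ}
    (hh : ∀ n, Measurable (h n)) (hr : ∀ n, Measurable (r n))
    (hr0 : ∀ n x, 0 ≤ r n x) {c : ℝ} (hh0 : ∀ n x, 0 ≤ h n x)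
    (hc : ∀ n x, h n x ≤ c) {δ K : ℝ} (hδ : 0 < δ) (hK : 0 ≤ K)
    (hr1 : ∀ n, ∫⁻ x, ENNReal.ofReal (r n x) ^ (1 + δ) ∂μ n ≤ ENNReal.ofReal K)
    (hlim : ∀ η : ℝ, 0 < η → Tendsto (fun n => μ n {x | η ≤ h n x}) atTop (nhds 0)) :
    Tendsto (fun n => ∫ x, h n x * r n x ∂μ n) atTop (nhds 0) := by
  rw [Metric.tendsto_nhds]
  intro e he
  obtain ⟨M, hM, hMe⟩ : ∃ M : ℝ, 0 < M ∧ c * (K * M ^ (-δ)) < e / 3 := by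
    have h1 : Tendsto (fun M : ℝ => c * (K * M ^ (-δ))) atTop (nhds 0) := by
      simpa using ((tendsto_rpow_neg_atTop hδ).const_mul K).const_mul c
    exact ((eventually_gt_atTop 0).and (h1.eventually_lt_const (by positivity))).exists
  have hη : 0 < e / (3 * M) := by positivity
  have h2 : Tendsto (fun n => M * (c * (μ n).real {x | e / (3 * M) ≤ h n x})) atTop (nhds 0) := by
    have h3 := (ENNReal.tendsto_toReal ENNReal.zero_ne_top).comp (hlim _ hη)
    simpa [Measure.real] using (h3.const_mul c).const_mul M
  filter_upwards [h2.eventually_lt_const (show 0 < e / 3 by positivity)] with n hn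
  have h4 := integral_mul_le_of_rpow_bound (μ n) (hh n) (hr n) (hr0 n) (hh0 n) (hc n) hδ hK
    (hr1 n) hM hη
  have h5 : M * (e / (3 * M)) = e / 3 := by field_simp
  have h6 : 0 ≤ ∫ x, h n x * r n x ∂μ n :=
    integral_nonneg fun x => mul_nonneg (hh0 n x) (hr0 n x)
  rw [Real.dist_eq, sub_zero, abs_of_nonneg h6]
  nlinarith

lemma integral_comp_of_map_eq {Ω : Type*} [MeasurableSpace Ω] {μ : Measure Ω} {T : Ω → Ω}
    (hT : Measurable T) (hμ : Measure.map T μ = μ) {u : Ω → ℝ} (hu : Measurable u) :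
    ∫ x, u (T x) ∂μ = ∫ x, u x ∂μ := by
  conv_rhs => rw [← hμ]
  exact (integral_map hT.aemeasurable hu.aestronglyMeasurable).symm

/-- Replacing `∫ f * ρ` by `∫ f` costs the time average of the displacement `|f ∘ g t - f|`
weighted by `ρ ∘ g t`, plus the `L¹` distance from `1` of the time average of `ρ ∘ g t`. -/
lemma abs_integral_density_sub_le {Ω : Type*} [MeasurableSpace Ω] (μ : Measure Ω)
    [IsProbabilityMeasure μ] {g : ℝ → Ω → Ω} (hg : Measurable fun p : ℝ × Ω => g p.1 p.2)
    (hinv : ∀ t, 0 ≤ t → Measure.map (g t) μ = μ) {ρ f : Ω → ℝ}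
    (hρ0 : ∀ x, 0 ≤ ρ x) (hρm : Measurable ρ) (hρi : Integrable ρ μ) (hf : Measurable f)
    {C : ℝ} (hC : ∀ x, |f x| ≤ C) {T : ℝ} (hT : 0 < T) :
    |∫ x, f x * ρ x ∂μ - ∫ x, f x ∂μ| ≤
      T⁻¹ * (∫ t in (0 : ℝ)..T, ∫ x, |f (g t x) - f x| * ρ (g t x) ∂μ)
        + C * ∫ x, |T⁻¹ * (∫ t in (0 : ℝ)..T, ρ (g t x)) - 1| ∂μ := by
  have hgt : ∀ t, Measurable (g t) := fun t => hg.comp measurable_prodMk_left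
  simp_rw [intervalIntegral.integral_of_le hT.le]
  set ν := volume.restrict (Set.Ioc (0 : ℝ) T) with hν
  have hνpos : ∀ᵐ t ∂ν, 0 ≤ t := by
    filter_upwards [ae_restrict_mem measurableSet_Ioc] with t ht using ht.1.le
  have hνreal : ν.real Set.univ = T := by simp [hν, hT.le]
  have hρg : Measurable fun p : ℝ × Ω => ρ (g p.1 p.2) := hρm.comp hg
  have hfg : Measurable fun p : ℝ × Ω => f (g p.1 p.2) := hf.comp hg
  have hf2 : Measurable fun p : ℝ × Ω => f p.2 := hf.comp measurable_snd
  have hρI : Integrable (fun p : ℝ × Ω => ρ (g p.1 p.2)) (ν.prod μ) := by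
    rw [integrable_prod_iff hρg.aestronglyMeasurable]
    constructor
    · filter_upwards [hνpos] with t ht
      exact (MeasurePreserving.mk (hgt t) (hinv t ht)).integrable_comp_of_integrable hρi
    · refine (integrable_const (∫ x, ‖ρ x‖ ∂μ)).congr ?_
      filter_upwards [hνpos] with t ht
      exact (integral_comp_of_map_eq (hgt t) (hinv t ht) hρm.norm).symm
  have hFI : Integrable (fun p : ℝ × Ω => f p.2 * ρ (g p.1 p.2)) (ν.prod μ) :=
    hρI.bdd_mul hf2.aestronglyMeasurable (ae_of_all _ fun p => hC _)
  have hGI : Integrable (fun p : ℝ × Ω => f (g p.1 p.2) * ρ (g p.1 p.2)) (ν.prod μ) :=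
    hρI.bdd_mul hfg.aestronglyMeasurable (ae_of_all _ fun p => hC _)
  have hHI : Integrable (fun p : ℝ × Ω => |f (g p.1 p.2) - f p.2| * ρ (g p.1 p.2)) (ν.prod μ) := by
    refine (hGI.sub hFI).abs.congr (ae_of_all _ fun p => ?_)
    simp only [Pi.sub_apply]
    rw [← sub_mul, abs_mul, abs_of_nonneg (hρ0 _)]
  have hfi : Integrable f μ :=
    Integrable.of_bound hf.aestronglyMeasurable C (ae_of_all _ hC)
  have hAi : Integrable (fun x => ∫ t, ρ (g t x) ∂ν) μ := hρI.integral_prod_right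
  -- By invariance the average over `[0, T]` of `∫ (f * ρ) ∘ g t` is `∫ f * ρ`.
  have hG : ∫ p, f (g p.1 p.2) * ρ (g p.1 p.2) ∂ν.prod μ = T * ∫ x, f x * ρ x ∂μ := by
    rw [integral_prod _ hGI]
    have : ∫ t, ∫ x, f (g t x) * ρ (g t x) ∂μ ∂ν = ∫ t, ∫ x, f x * ρ x ∂μ ∂ν := by
      refine integral_congr_ae ?_
      filter_upwards [hνpos] with t ht
      exact integral_comp_of_map_eq (hgt t) (hinv t ht) (hf.mul hρm)
    simp only [this, integral_const, hνreal, smul_eq_mul]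
  have hF : ∫ p, f p.2 * ρ (g p.1 p.2) ∂ν.prod μ = ∫ x, f x * ∫ t, ρ (g t x) ∂ν ∂μ := by
    rw [integral_prod_symm _ hFI]
    simp only [integral_const_mul]
  have hfA : Integrable (fun x => f x * (T⁻¹ * ∫ t, ρ (g t x) ∂ν)) μ :=
    (hAi.const_mul _).bdd_mul hf.aestronglyMeasurable (ae_of_all _ hC)
  have key : ∫ x, f x * ρ x ∂μ - ∫ x, f x ∂μ =
      T⁻¹ * (∫ p, f (g p.1 p.2) * ρ (g p.1 p.2) - f p.2 * ρ (g p.1 p.2) ∂ν.prod μ)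
        + ∫ x, f x * (T⁻¹ * (∫ t, ρ (g t x) ∂ν) - 1) ∂μ := by
    have h1 : ∫ x, f x * (T⁻¹ * (∫ t, ρ (g t x) ∂ν) - 1) ∂μ
        = T⁻¹ * (∫ x, f x * ∫ t, ρ (g t x) ∂ν ∂μ) - ∫ x, f x ∂μ := by
      rw [← integral_const_mul, ← integral_sub _ hfi]
      · congr 1; ext x; ring
      · exact hfA.congr (ae_of_all _ fun x => by ring)
    rw [integral_sub hGI hFI, hG, hF, h1]
    field_simp
    ring
  rw [key]
  refine (abs_add_le _ _).trans (add_le_add ?_ ?_)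
  · rw [abs_mul, abs_of_pos (inv_pos.2 hT), ← integral_prod _ hHI]
    refine mul_le_mul_of_nonneg_left ?_ (inv_pos.2 hT).le
    refine abs_integral_le_integral_abs.trans_eq (integral_congr_ae (ae_of_all _ fun p => ?_))
    dsimp only
    rw [← sub_mul, abs_mul, abs_of_nonneg (hρ0 _)]
  · rw [← integral_const_mul]
    refine abs_integral_le_integral_abs.trans (integral_mono_of_nonneg
      (ae_of_all _ fun x => abs_nonneg _)
      (((hAi.const_mul _).sub (integrable_const 1)).abs.const_mul C) (ae_of_all _ fun x => ?_))
    dsimp only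
    rw [abs_mul]
    exact mul_le_mul_of_nonneg_right (hC x) (abs_nonneg _)

/-- It suffices to test distributional convergence on bounded Lipschitz functions: if two sequences
of laws of `R' n` have asymptotically equal integrals of these, they have the same limit. -/
lemma tendsto_of_lipschitz_sub_tendsto_zero {Ω : ℕ → Type*} [∀ n, MeasurableSpace (Ω n)]
    (α β : ∀ n, Measure (Ω n)) [∀ n, IsProbabilityMeasure (α n)]
    [∀ n, IsProbabilityMeasure (β n)]
    {B : Type*} [MetricSpace B] [MeasurableSpace B] [BorelSpace B]
    {R' : ∀ n, Ω n → B} (hR' : ∀ n, Measurable (R' n))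
    {Ω₀ : Type*} [MeasurableSpace Ω₀] (P : Measure Ω₀) [IsProbabilityMeasure P]
    {R : Ω₀ → B} (hR : Measurable R)
    (hsub : ∀ ψ : B → ℝ, (∃ L, LipschitzWith L ψ) → (∃ c : ℝ, ∀ b, |ψ b| ≤ c) →
      Tendsto (fun n => ∫ x, ψ (R' n x) ∂β n - ∫ x, ψ (R' n x) ∂α n) atTop (nhds 0))
    (hα : ∀ ψ : B → ℝ, Continuous ψ → (∃ c : ℝ, ∀ b, |ψ b| ≤ c) →
      Tendsto (fun n => ∫ x, ψ (R' n x) ∂α n) atTop (nhds (∫ ω, ψ (R ω) ∂P))) :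
    ∀ ψ : B → ℝ, Continuous ψ → (∃ c : ℝ, ∀ b, |ψ b| ≤ c) →
      Tendsto (fun n => ∫ x, ψ (R' n x) ∂β n) atTop (nhds (∫ ω, ψ (R ω) ∂P)) := by
  let law : ℕ → ProbabilityMeasure B := fun n =>
    ⟨(β n).map (R' n), Measure.isProbabilityMeasure_map (hR' n).aemeasurable⟩
  let lawR : ProbabilityMeasure B :=
    ⟨P.map R, Measure.isProbabilityMeasure_map hR.aemeasurable⟩
  have hlaw : Tendsto law atTop (nhds lawR) := by
    rw [tendsto_iff_forall_lipschitz_integral_tendsto]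
    rintro ψ ⟨C, hC⟩ ⟨L, hL⟩
    have hbdd : ∃ c : ℝ, ∀ b, |ψ b| ≤ c := by
      obtain ⟨ω⟩ : Nonempty Ω₀ := P.nonempty_of_neZero
      refine ⟨C + |ψ (R ω)|, fun b => ?_⟩
      have h1 := hC b (R ω)
      rw [Real.dist_eq] at h1
      have h2 := abs_add_le (ψ b - ψ (R ω)) (ψ (R ω))
      rw [sub_add_cancel] at h2
      linarith
    have h := (hsub ψ ⟨L, hL⟩ hbdd).add (hα ψ hL.continuous hbdd)
    simp only [sub_add_cancel, zero_add] at h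
    change Tendsto (fun n => ∫ b, ψ b ∂((β n).map (R' n))) atTop (nhds (∫ b, ψ b ∂(P.map R)))
    rw [integral_map hR.aemeasurable hL.continuous.measurable.aestronglyMeasurable]
    refine h.congr fun n => ?_
    exact (integral_map (hR' n).aemeasurable hL.continuous.measurable.aestronglyMeasurable).symm
  rintro ψ hψ ⟨c, hc⟩
  have h := (ProbabilityMeasure.tendsto_iff_forall_integral_tendsto.1 hlaw)
    (BoundedContinuousFunction.ofNormedAddCommGroup ψ hψ c hc)
  change Tendsto (fun n => ∫ b, ψ b ∂((β n).map (R' n))) atTop (nhds (∫ b, ψ b ∂(P.map R))) at h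
  rw [integral_map hR.aemeasurable hψ.measurable.aestronglyMeasurable] at h
  refine h.congr fun n => ?_
  exact integral_map (hR' n).aemeasurable hψ.measurable.aestronglyMeasurable

/-- **Strong distributional convergence for families of semiflows** (Lemma `lem:SDC`).
Let `(Ω_n, μ_n)` be probability spaces with measure-preserving semiflows `g_{n,t}`,
`λ_n ≪ μ_n` with densities `ρ_n`, `R_n : Ω_n → B` Borel random elements and `R` a
random element of `B`.  Under (S1) `sup_n ∫ ρ_n^{1+δ} dμ_n < ∞`, (S2)
`d_B(R_n∘g_{n,t}, R_n) → 0` in `μ_n`-measure for each `t ≥ 0`, and (S3)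
`inf_{t₁>0} limsup_n ∫ |(1/t₁)∫_0^{t₁} ρ_n∘g_{n,t} dt − 1| dμ_n = 0`,
we have `R_n →_{μ_n} R` iff `R_n →_{λ_n} R`. -/
theorem strong_distributional_convergence_semiflow
    (Ω : ℕ → Type) [∀ n, MeasurableSpace (Ω n)]
    (μ : ∀ n, Measure (Ω n)) (hμ : ∀ n, IsProbabilityMeasure (μ n))
    (g : ∀ n, ℝ → Ω n → Ω n)
    (hg_meas : ∀ n, Measurable fun p : ℝ × Ω n => g n p.1 p.2)
    (hg_zero : ∀ n, g n 0 = id)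
    (hg_add : ∀ n, ∀ s t : ℝ, 0 ≤ s → 0 ≤ t → g n (s + t) = g n s ∘ g n t)
    (hg_inv : ∀ n, ∀ t : ℝ, 0 ≤ t → Measure.map (g n t) (μ n) = μ n)
    (lam : ∀ n, Measure (Ω n)) (hlam : ∀ n, IsProbabilityMeasure (lam n))
    (ρ : ∀ n, Ω n → ℝ) (hρ_nonneg : ∀ n x, 0 ≤ ρ n x) (hρ_meas : ∀ n, Measurable (ρ n))
    (hdensity : ∀ n, lam n = (μ n).withDensity fun x => ENNReal.ofReal (ρ n x))
    (B : Type) [MetricSpace B] [MeasurableSpace B] [BorelSpace B]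
    (R' : ∀ n, Ω n → B) (hR'_meas : ∀ n, Measurable (R' n))
    (Ω₀ : Type) [MeasurableSpace Ω₀] (P : Measure Ω₀) (hP : IsProbabilityMeasure P)
    (R : Ω₀ → B) (hR_meas : Measurable R)
    -- (S1)
    (δ : ℝ) (hδ : 0 < δ)
    (hS1 : ∃ K : ℝ, ∀ n,
      (∫⁻ x, ENNReal.ofReal (ρ n x) ^ (1 + δ) ∂μ n) ≤ ENNReal.ofReal K)
    -- (S2)
    (hS2 : ∀ t : ℝ, 0 ≤ t → ∀ ε : ℝ, 0 < ε →
      Tendsto (fun n => μ n {x | ε ≤ dist (R' n (g n t x)) (R' n x)}) atTop (nhds 0))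
    -- (S3)
    (hS3 : ∀ ε : ℝ, 0 < ε → ∃ t₁ : ℝ, 0 < t₁ ∧ ∀ᶠ n in atTop,
      (∫ x, |t₁⁻¹ * (∫ t in (0 : ℝ)..t₁, ρ n (g n t x)) - 1| ∂μ n) ≤ ε) :
    (∀ ψ : B → ℝ, Continuous ψ → (∃ c : ℝ, ∀ b, |ψ b| ≤ c) →
        Tendsto (fun n => ∫ x, ψ (R' n x) ∂μ n) atTop (nhds (∫ ω, ψ (R ω) ∂P))) ↔
      (∀ ψ : B → ℝ, Continuous ψ → (∃ c : ℝ, ∀ b, |ψ b| ≤ c) →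
        Tendsto (fun n => ∫ x, ψ (R' n x) ∂lam n) atTop (nhds (∫ ω, ψ (R ω) ∂P))) := by
  obtain ⟨K', hK'⟩ := hS1
  obtain ⟨K, hK0, hK⟩ : ∃ K : ℝ, 0 ≤ K ∧ ∀ n,
      (∫⁻ x, ENNReal.ofReal (ρ n x) ^ (1 + δ) ∂μ n) ≤ ENNReal.ofReal K :=
    ⟨max K' 0, le_max_right _ _, fun n =>
      (hK' n).trans (ENNReal.ofReal_le_ofReal (le_max_left _ _))⟩
  have hgt : ∀ n t, Measurable (g n t) := fun n t => (hg_meas n).comp measurable_prodMk_left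
  have hρ1 : ∀ n, ∫⁻ x, ENNReal.ofReal (ρ n x) ∂μ n = 1 := by
    intro n
    have h := (hlam n).measure_univ
    rwa [hdensity n, withDensity_apply _ MeasurableSet.univ, Measure.restrict_univ] at h
  have hρi : ∀ n, Integrable (ρ n) (μ n) := fun n =>
    ⟨(hρ_meas n).aestronglyMeasurable, by
      rw [hasFiniteIntegral_iff_ofReal (ae_of_all _ (hρ_nonneg n)), hρ1 n]
      exact ENNReal.one_lt_top⟩
  have hρint : ∀ n, ∫ x, ρ n x ∂μ n = 1 := by
    intro n
    rw [integral_eq_lintegral_of_nonneg_ae (ae_of_all _ (hρ_nonneg n))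
      (hρ_meas n).aestronglyMeasurable, hρ1 n, ENNReal.toReal_one]
  have hlamint : ∀ n (u : Ω n → ℝ), ∫ x, u x ∂lam n = ∫ x, u x * ρ n x ∂μ n := by
    intro n u
    rw [hdensity n, integral_withDensity_eq_integral_toReal_smul (hρ_meas n).ennreal_ofReal
      (ae_of_all _ fun x => ENNReal.ofReal_lt_top)]
    refine integral_congr_ae (ae_of_all _ fun x => ?_)
    simp only [ENNReal.toReal_ofReal (hρ_nonneg n x), smul_eq_mul, mul_comm]
  have hsub : ∀ ψ : B → ℝ, (∃ L, LipschitzWith L ψ) → (∃ c : ℝ, ∀ b, |ψ b| ≤ c) →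
      Tendsto (fun n => ∫ x, ψ (R' n x) ∂lam n - ∫ x, ψ (R' n x) ∂μ n) atTop (nhds 0) := by
    rintro ψ ⟨L, hL⟩ ⟨C₁, hC₁⟩
    -- Strictly positive versions of the bound and of the Lipschitz constant.
    obtain ⟨C, hC0, hC⟩ : ∃ C : ℝ, 0 < C ∧ ∀ b, |ψ b| ≤ C :=
      ⟨max C₁ 1, by positivity, fun b => (hC₁ b).trans (le_max_left _ _)⟩
    have hL0 : 0 < (L : ℝ) + 1 := by positivity
    have hdiff : ∀ a b, |ψ a - ψ b| ≤ 2 * C := fun a b => by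
      linarith [abs_sub (ψ a) (ψ b), hC a, hC b]
    have hψR : ∀ n, Measurable fun x => ψ (R' n x) := fun n =>
      hL.continuous.measurable.comp (hR'_meas n)
    have hDt : ∀ t : ℝ, 0 ≤ t → Tendsto (fun n =>
        ∫ x, |ψ (R' n (g n t x)) - ψ (R' n x)| * ρ n (g n t x) ∂μ n) atTop (nhds 0) := by
      intro t ht
      refine tendsto_integral_mul_zero μ (c := 2 * C) (δ := δ) (K := K)
        (fun n => (((hψR n).comp (hgt n t)).sub (hψR n)).abs)
        (fun n => (hρ_meas n).comp (hgt n t)) (fun n x => hρ_nonneg n _)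
        (fun n x => abs_nonneg _) (fun n x => hdiff _ _) hδ hK0 (fun n => ?_) fun η hη => ?_
      · refine le_of_eq_of_le ?_ (hK n)
        conv_rhs => rw [← hg_inv n t ht]
        exact (lintegral_map ((hρ_meas n).ennreal_ofReal.pow_const _) (hgt n t)).symm
      · refine tendsto_of_tendsto_of_tendsto_of_le_of_le tendsto_const_nhds
          (hS2 t ht (η / (L + 1)) (by positivity)) (fun n => zero_le) fun n =>
            measure_mono fun x hx => ?_
        have h1 : η ≤ |ψ (R' n (g n t x)) - ψ (R' n x)| := hx
        have h2 := hL.dist_le_mul (R' n (g n t x)) (R' n x)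
        rw [Real.dist_eq] at h2
        change η / (L + 1) ≤ dist (R' n (g n t x)) (R' n x)
        rw [div_le_iff₀ hL0]
        nlinarith [dist_nonneg (x := R' n (g n t x)) (y := R' n x)]
    have hDT : ∀ T : ℝ, 0 < T → Tendsto (fun n => ∫ t in (0 : ℝ)..T,
        ∫ x, |ψ (R' n (g n t x)) - ψ (R' n x)| * ρ n (g n t x) ∂μ n) atTop (nhds 0) := by
      intro T hT
      have h := intervalIntegral.tendsto_integral_filter_of_dominated_convergence
        (μ := volume) (a := 0) (b := T) (l := atTop) (f := fun _ => (0 : ℝ))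
        (F := fun n t => ∫ x, |ψ (R' n (g n t x)) - ψ (R' n x)| * ρ n (g n t x) ∂μ n)
        (fun _ => 2 * C) (Eventually.of_forall fun n => ?_) (Eventually.of_forall fun n =>
          ae_of_all _ fun t ht => ?_) intervalIntegrable_const (ae_of_all _ fun t ht => ?_)
      · simpa using h
      · have hm : Measurable fun p : ℝ × Ω n =>
            |ψ (R' n (g n p.1 p.2)) - ψ (R' n p.2)| * ρ n (g n p.1 p.2) :=
          (((hψR n).comp (hg_meas n)).sub ((hψR n).comp measurable_snd)).abs.mul
            ((hρ_meas n).comp (hg_meas n))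
        exact hm.stronglyMeasurable.integral_prod_right'.aestronglyMeasurable
      · rw [Set.uIoc_of_le hT.le] at ht
        have hρt : Integrable (fun x => ρ n (g n t x)) (μ n) :=
          (MeasurePreserving.mk (hgt n t) (hg_inv n t ht.1.le)).integrable_comp_of_integrable
            (hρi n)
        rw [Real.norm_of_nonneg (integral_nonneg fun x =>
          mul_nonneg (abs_nonneg _) (hρ_nonneg n _))]
        calc ∫ x, |ψ (R' n (g n t x)) - ψ (R' n x)| * ρ n (g n t x) ∂μ n
            ≤ ∫ x, 2 * C * ρ n (g n t x) ∂μ n :=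
              integral_mono_of_nonneg (ae_of_all _ fun x =>
                mul_nonneg (abs_nonneg _) (hρ_nonneg n _)) (hρt.const_mul _)
                (ae_of_all _ fun x =>
                  mul_le_mul_of_nonneg_right (hdiff _ _) (hρ_nonneg n _))
          _ = 2 * C := by
              rw [integral_const_mul,
                integral_comp_of_map_eq (hgt n t) (hg_inv n t ht.1.le) (hρ_meas n), hρint n,
                mul_one]
      · rw [Set.uIoc_of_le hT.le] at ht
        exact hDt t ht.1.le
    rw [Metric.tendsto_nhds]
    intro e he
    obtain ⟨T, hT, hTn⟩ := hS3 (e / (2 * C)) (by positivity)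
    have h1 : Tendsto (fun n => T⁻¹ * ∫ t in (0 : ℝ)..T,
        ∫ x, |ψ (R' n (g n t x)) - ψ (R' n x)| * ρ n (g n t x) ∂μ n) atTop (nhds 0) := by
      simpa using (hDT T hT).const_mul T⁻¹
    filter_upwards [hTn, h1.eventually_lt_const (half_pos he)] with n hn1 hn2
    have h2 := abs_integral_density_sub_le (μ n) (hg_meas n) (hg_inv n) (hρ_nonneg n)
      (hρ_meas n) (hρi n) (hψR n) (fun x => hC _) hT
    have h3 := mul_le_mul_of_nonneg_left hn1 hC0.le
    have h4 : C * (e / (2 * C)) = e / 2 := by field_simp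
    rw [Real.dist_eq, sub_zero, hlamint n]
    linarith
  constructor
  · exact tendsto_of_lipschitz_sub_tendsto_zero μ lam hR'_meas P hR_meas hsub
  · refine tendsto_of_lipschitz_sub_tendsto_zero lam μ hR'_meas P hR_meas fun ψ hL hc => ?_
    simpa using (hsub ψ hL hc).neg
end
end

section
/- Let (Λ_n, μ_n), n ≥ 1, be probability spaces with measure-preserving maps T_n : Λ_n → Λ_n. Let λ_n be probability measures on Λ_n with λ_n ≪ μ_n and densities ρ_n = dλ_n/dμ_n. Let (B, d_B) be a metric space, R_n : Λ_n → B Borel measurable, and R a random element of B. Assume: (S1) sup_n ∫ ρ_n^{1+δ} dμ_n < ∞ for some δ > 0; (S4) d_B(R_n ∘ T_n, R_n) → 0 in μ_n-measure as n → ∞; (S5) inf_{N≥1} limsup_{n→∞} ∫ | (1/N) Σ_{j=0}^{N−1} ρ_n ∘ T_n^j − 1 | dμ_n = 0. Then R_n →_{μ_n} R if and only if R_n →_{λ_n} R. -/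
/-!
For a bounded Lipschitz `ψ` put `f_n = ψ ∘ R_n`. It suffices to show
`∫ f_n dλ_n - ∫ f_n dμ_n → 0`, since bounded Lipschitz functions determine convergence in
distribution (`tendsto_integral_of_lipschitz`).

By invariance of `μ_n`, `∫ f_n ρ_n dμ_n = ∫ (f_n ∘ T_n^j) (ρ_n ∘ T_n^j) dμ_n` for every `j`. As
`f_n ∘ T_n - f_n → 0` in `L¹(μ_n)` by (S4) (`integral_abs_lipschitz_sub_le`), and the `ρ_n` are
uniformly integrable by (S1), the factor `f_n ∘ T_n^j` may be replaced by `f_n`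
(`abs_integral_mul_sub_iterate_le`). Uniform integrability is used in the concrete form
`ρ ≤ M + M ^ (-δ) ρ ^ (1 + δ)`. Averaging over `j < N` puts the Birkhoff average of `ρ_n` next to
`f_n`, and (S5) says that it is `L¹`-close to `1` (`abs_integral_mul_sub_integral_le`).
-/

open MeasureTheory Filter

noncomputable section

/-- Convergence in distribution on a metric space (not assumed separable) can be tested on bounded
Lipschitz functions, stated for random elements living on varying probability spaces. -/
lemma tendsto_integral_of_lipschitz {Λ : ℕ → Type} [∀ n, MeasurableSpace (Λ n)]
    {ν : ∀ n, Measure (Λ n)} (hν : ∀ n, IsProbabilityMeasure (ν n))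
    {B : Type} [MetricSpace B] [MeasurableSpace B] [BorelSpace B]
    {X : ∀ n, Λ n → B} (hX : ∀ n, Measurable (X n))
    {Ω₀ : Type} [MeasurableSpace Ω₀] {P : Measure Ω₀} (hP : IsProbabilityMeasure P)
    {R : Ω₀ → B} (hR : Measurable R)
    (h : ∀ ψ : B → ℝ, (∃ L, LipschitzWith L ψ) → (∃ c : ℝ, ∀ b, |ψ b| ≤ c) →
      Tendsto (fun n => ∫ x, ψ (X n x) ∂ν n) atTop (nhds (∫ ω, ψ (R ω) ∂P)))
    (ψ : B → ℝ) (hψ : Continuous ψ) (hb : ∃ c : ℝ, ∀ b, |ψ b| ≤ c) :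
    Tendsto (fun n => ∫ x, ψ (X n x) ∂ν n) atTop (nhds (∫ ω, ψ (R ω) ∂P)) := by
  obtain ⟨c, hc⟩ := hb
  let law : ℕ → ProbabilityMeasure B := fun n =>
    ⟨(ν n).map (X n), Measure.isProbabilityMeasure_map (hX n).aemeasurable⟩
  let lawR : ProbabilityMeasure B := ⟨P.map R, Measure.isProbabilityMeasure_map hR.aemeasurable⟩
  have map_n : ∀ φ : B → ℝ, Continuous φ → ∀ n,
      ∫ b, φ b ∂(law n : Measure B) = ∫ x, φ (X n x) ∂ν n := fun φ hφ n =>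
    integral_map (hX n).aemeasurable hφ.measurable.aestronglyMeasurable
  have map_R : ∀ φ : B → ℝ, Continuous φ →
      ∫ b, φ b ∂(lawR : Measure B) = ∫ ω, φ (R ω) ∂P := fun φ hφ =>
    integral_map hR.aemeasurable hφ.measurable.aestronglyMeasurable
  have hlaw : Tendsto law atTop (nhds lawR) := by
    rw [tendsto_iff_forall_lipschitz_integral_tendsto]
    rintro φ ⟨C, hC⟩ ⟨L, hL⟩
    simp_rw [map_n φ hL.continuous, map_R φ hL.continuous]
    refine h φ ⟨L, hL⟩ ?_
    rcases isEmpty_or_nonempty B with hB | ⟨⟨b₀⟩⟩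
    · exact ⟨0, fun b => (hB.false b).elim⟩
    · refine ⟨C + |φ b₀|, fun b => ?_⟩
      have h1 := hC b b₀
      rw [Real.dist_eq] at h1
      linarith [abs_sub_abs_le_abs_sub (φ b) (φ b₀)]
  have key := ProbabilityMeasure.tendsto_iff_forall_integral_tendsto.1 hlaw
    (BoundedContinuousFunction.ofNormedAddCommGroup ψ hψ c hc)
  simpa [map_n ψ hψ, map_R ψ hψ] using key

/-- Bochner integrals are invariant under a measure-preserving map, which need not be an
embedding. -/
lemma integral_comp_of_measurePreserving {Λ : Type} [MeasurableSpace Λ] {μ : Measure Λ}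
    {S : Λ → Λ} (hS : MeasurePreserving S μ μ) {g : Λ → ℝ} (hg : Measurable g) :
    ∫ x, g (S x) ∂μ = ∫ x, g x ∂μ := by
  conv_rhs => rw [← hS.map_eq]
  exact (integral_map hS.aemeasurable hg.aestronglyMeasurable).symm

/-- The truncation estimate that replaces uniform integrability. -/
lemma le_add_rpow {M δ r : ℝ} (hM : 0 < M) (hδ : 0 < δ) (hr : 0 ≤ r) :
    r ≤ M + M ^ (-δ) * r ^ (1 + δ) := by
  rcases le_total r M with h | h
  · have : 0 ≤ M ^ (-δ) * r ^ (1 + δ) := by positivity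
    linarith
  · have hr' : 0 < r := hM.trans_le h
    have h1 : M ^ δ ≤ r ^ δ := Real.rpow_le_rpow hM.le h hδ.le
    have h2 : M ^ (-δ) * M ^ δ = 1 := by
      rw [← Real.rpow_add hM]; simp
    have h3 : 0 < M ^ (-δ) := by positivity
    rw [Real.rpow_add hr', Real.rpow_one]
    have h4 : M ^ (-δ) * M ^ δ ≤ M ^ (-δ) * r ^ δ := by gcongr
    nlinarith

lemma integral_abs_iterate_sub_le {Λ : Type} [MeasurableSpace Λ] {μ : Measure Λ}
    [IsProbabilityMeasure μ] {T : Λ → Λ} (hT : MeasurePreserving T μ μ)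
    {f : Λ → ℝ} (hf : Measurable f) {c : ℝ} (hc : ∀ x, |f x| ≤ c) (j : ℕ) :
    ∫ x, |f (T^[j] x) - f x| ∂μ ≤ j * ∫ x, |f (T x) - f x| ∂μ := by
  have hint : ∀ {S S' : Λ → Λ}, Measurable S → Measurable S' →
      Integrable (fun x => |f (S x) - f (S' x)|) μ := fun {S S'} hS hS' => by
    refine ((Integrable.of_bound (hf.comp hS).aestronglyMeasurable c (ae_of_all _ ?_)).sub
      (Integrable.of_bound (hf.comp hS').aestronglyMeasurable c (ae_of_all _ ?_))).abs
    · exact fun x => hc _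
    · exact fun x => hc _
  have hid : Measurable (fun x : Λ => x) := measurable_id
  induction j with
  | zero => simp
  | succ j ih =>
    have hj := hT.iterate j
    have hTj := (hT.iterate (j + 1)).measurable
    have e : ∫ x, |f (T^[j + 1] x) - f (T^[j] x)| ∂μ = ∫ x, |f (T x) - f x| ∂μ := by
      simp_rw [Function.iterate_succ_apply']
      exact integral_comp_of_measurePreserving (g := fun x => |f (T x) - f x|) hj
        ((hf.comp hT.measurable).sub hf).abs
    calc ∫ x, |f (T^[j + 1] x) - f x| ∂μ
        ≤ ∫ x, (|f (T^[j + 1] x) - f (T^[j] x)| + |f (T^[j] x) - f x|) ∂μ :=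
          integral_mono (hint hTj hid) ((hint hTj hj.measurable).add (hint hj.measurable hid))
            fun x => abs_sub_le _ _ _
      _ = ∫ x, |f (T x) - f x| ∂μ + ∫ x, |f (T^[j] x) - f x| ∂μ := by
          rw [integral_add (hint hTj hj.measurable) (hint hj.measurable hid), e]
      _ ≤ _ := by push_cast; linarith

/-- Replacing the weight `ρ` by `ρ ∘ T^j` changes the integral of `f` little if `f` is almost
`T`-invariant: by invariance `∫ f ρ = ∫ (f ∘ T^j) (ρ ∘ T^j)`, and `ρ ∘ T^j` is truncated at
level `M`. -/
lemma abs_integral_mul_sub_iterate_le {Λ : Type} [MeasurableSpace Λ] {μ : Measure Λ}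
    [IsProbabilityMeasure μ] {T : Λ → Λ} (hT : MeasurePreserving T μ μ)
    {ρ : Λ → ℝ} (hρ0 : ∀ x, 0 ≤ ρ x) (hρ : Measurable ρ) (hρi : Integrable ρ μ)
    {δ K : ℝ} (hδ : 0 < δ) (hpi : Integrable (fun x => ρ x ^ (1 + δ)) μ)
    (hK : ∫ x, ρ x ^ (1 + δ) ∂μ ≤ K)
    {f : Λ → ℝ} (hf : Measurable f) {c : ℝ} (hc : ∀ x, |f x| ≤ c) {M : ℝ} (hM : 0 < M) (j : ℕ) :
    |∫ x, f x * ρ x ∂μ - ∫ x, f x * ρ (T^[j] x) ∂μ|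
      ≤ M * (j * ∫ x, |f (T x) - f x| ∂μ) + 2 * c * M ^ (-δ) * K := by
  have hj := hT.iterate j
  have hc0 : 0 ≤ c := by
    obtain ⟨x⟩ := nonempty_of_isProbabilityMeasure μ
    exact (abs_nonneg _).trans (hc x)
  have hρj : Integrable (fun x => ρ (T^[j] x)) μ := hj.integrable_comp_of_integrable hρi
  have hpj : Integrable (fun x => ρ (T^[j] x) ^ (1 + δ)) μ :=
    hj.integrable_comp_of_integrable hpi
  have hfj : Measurable fun x => f (T^[j] x) := hf.comp hj.measurable
  have i1 : Integrable (fun x => f (T^[j] x) * ρ (T^[j] x)) μ :=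
    hρj.bdd_mul hfj.aestronglyMeasurable (ae_of_all _ fun x => hc _)
  have i2 : Integrable (fun x => f x * ρ (T^[j] x)) μ :=
    hρj.bdd_mul hf.aestronglyMeasurable (ae_of_all _ fun x => hc _)
  have i3 : Integrable (fun x => |f (T^[j] x) - f x|) μ :=
    ((Integrable.of_bound hfj.aestronglyMeasurable c (ae_of_all _ fun x => hc _)).sub
      (Integrable.of_bound hf.aestronglyMeasurable c (ae_of_all _ fun x => hc _))).abs
  have e1 : ∫ x, f x * ρ x ∂μ = ∫ x, f (T^[j] x) * ρ (T^[j] x) ∂μ :=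
    (integral_comp_of_measurePreserving (g := fun x => f x * ρ x) hj (hf.mul hρ)).symm
  have e2 : ∫ x, ρ (T^[j] x) ^ (1 + δ) ∂μ = ∫ x, ρ x ^ (1 + δ) ∂μ :=
    integral_comp_of_measurePreserving (g := fun x => ρ x ^ (1 + δ)) hj (hρ.pow_const _)
  rw [e1, ← integral_sub i1 i2]
  have hMδ : 0 < M ^ (-δ) := by positivity
  calc |∫ x, (f (T^[j] x) * ρ (T^[j] x) - f x * ρ (T^[j] x)) ∂μ|
      ≤ ∫ x, |f (T^[j] x) * ρ (T^[j] x) - f x * ρ (T^[j] x)| ∂μ := abs_integral_le_integral_abs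
    _ ≤ ∫ x, (M * |f (T^[j] x) - f x| + 2 * c * M ^ (-δ) * ρ (T^[j] x) ^ (1 + δ)) ∂μ := by
        refine integral_mono (i1.sub i2).abs ((i3.const_mul _).add (hpj.const_mul _)) fun x => ?_
        have h1 := le_add_rpow hM hδ (hρ0 (T^[j] x))
        have h2 : |f (T^[j] x) - f x| ≤ 2 * c :=
          (abs_sub _ _).trans (by linarith [hc (T^[j] x), hc x])
        have h3 : 0 ≤ M ^ (-δ) * ρ (T^[j] x) ^ (1 + δ) :=
          mul_nonneg hMδ.le (Real.rpow_nonneg (hρ0 _) _)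
        have h4 := mul_le_mul_of_nonneg_left h1 (abs_nonneg (f (T^[j] x) - f x))
        have h5 := mul_le_mul_of_nonneg_right h2 h3
        simp only [← sub_mul, abs_mul, abs_of_nonneg (hρ0 (T^[j] x))]
        linarith
    _ = M * ∫ x, |f (T^[j] x) - f x| ∂μ + 2 * c * M ^ (-δ) * ∫ x, ρ x ^ (1 + δ) ∂μ := by
        rw [integral_add (i3.const_mul _) (hpj.const_mul _), integral_const_mul,
          integral_const_mul, e2]
    _ ≤ _ := by
        have := integral_abs_iterate_sub_le hT hf hc j
        gcongr

/-- Quantitative comparison of `∫ f ρ dμ` with `∫ f dμ`, obtained by averaging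
`abs_integral_mul_sub_iterate_le` over `j < N`. -/
lemma abs_integral_mul_sub_integral_le {Λ : Type} [MeasurableSpace Λ] {μ : Measure Λ}
    [IsProbabilityMeasure μ] {T : Λ → Λ} (hT : MeasurePreserving T μ μ)
    {ρ : Λ → ℝ} (hρ0 : ∀ x, 0 ≤ ρ x) (hρ : Measurable ρ) (hρi : Integrable ρ μ)
    {δ K : ℝ} (hδ : 0 < δ) (hpi : Integrable (fun x => ρ x ^ (1 + δ)) μ)
    (hK : ∫ x, ρ x ^ (1 + δ) ∂μ ≤ K)
    {f : Λ → ℝ} (hf : Measurable f) {c : ℝ} (hc : ∀ x, |f x| ≤ c) {M : ℝ} (hM : 0 < M)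
    {N : ℕ} (hN : 1 ≤ N) :
    |∫ x, f x * ρ x ∂μ - ∫ x, f x ∂μ|
      ≤ M * (N * ∫ x, |f (T x) - f x| ∂μ) + 2 * c * M ^ (-δ) * K
        + c * ∫ x, |(N : ℝ)⁻¹ * ∑ j ∈ Finset.range N, ρ (T^[j] x) - 1| ∂μ := by
  have hN0 : (0 : ℝ) < N := by exact_mod_cast hN
  have ha : 0 ≤ ∫ x, |f (T x) - f x| ∂μ := integral_nonneg fun x => abs_nonneg _
  have hρj : ∀ j, Integrable (fun x => ρ (T^[j] x)) μ := fun j =>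
    (hT.iterate j).integrable_comp_of_integrable hρi
  have hfb : ∀ᵐ x ∂μ, ‖f x‖ ≤ c := ae_of_all _ hc
  have ifj : ∀ j, Integrable (fun x => f x * ρ (T^[j] x)) μ := fun j =>
    (hρj j).bdd_mul hf.aestronglyMeasurable hfb
  have hfi : Integrable f μ := Integrable.of_bound hf.aestronglyMeasurable c hfb
  have iA : Integrable (fun x => (N : ℝ)⁻¹ * ∑ j ∈ Finset.range N, ρ (T^[j] x)) μ :=
    (integrable_finsetSum _ fun j _ => hρj j).const_mul _
  have iA1 : Integrable (fun x => (N : ℝ)⁻¹ * ∑ j ∈ Finset.range N, ρ (T^[j] x) - 1) μ :=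
    iA.sub (integrable_const 1)
  have ifA : Integrable (fun x => f x * ((N : ℝ)⁻¹ * ∑ j ∈ Finset.range N, ρ (T^[j] x))) μ :=
    iA.bdd_mul hf.aestronglyMeasurable hfb
  have eA : ∫ x, f x * ((N : ℝ)⁻¹ * ∑ j ∈ Finset.range N, ρ (T^[j] x)) ∂μ
      = (N : ℝ)⁻¹ * ∑ j ∈ Finset.range N, ∫ x, f x * ρ (T^[j] x) ∂μ := by
    rw [← integral_finsetSum _ fun j _ => ifj j, ← integral_const_mul]
    congr 1 with x
    rw [← Finset.mul_sum]; ring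
  have h1 : |∫ x, f x * ρ x ∂μ
        - ∫ x, f x * ((N : ℝ)⁻¹ * ∑ j ∈ Finset.range N, ρ (T^[j] x)) ∂μ|
      ≤ M * (N * ∫ x, |f (T x) - f x| ∂μ) + 2 * c * M ^ (-δ) * K := by
    have e : ∫ x, f x * ρ x ∂μ - (N : ℝ)⁻¹ * ∑ j ∈ Finset.range N, ∫ x, f x * ρ (T^[j] x) ∂μ
        = (N : ℝ)⁻¹ * ∑ j ∈ Finset.range N,
          (∫ x, f x * ρ x ∂μ - ∫ x, f x * ρ (T^[j] x) ∂μ) := by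
      rw [Finset.sum_sub_distrib, Finset.sum_const, Finset.card_range, nsmul_eq_mul]
      field_simp
    rw [eA, e, abs_mul, abs_of_pos (inv_pos.2 hN0), inv_mul_le_iff₀ hN0]
    refine (Finset.abs_sum_le_sum_abs _ _).trans ?_
    refine (Finset.sum_le_card_nsmul _ _ _ fun j hj => ?_).trans_eq
      (by rw [Finset.card_range, nsmul_eq_mul])
    refine (abs_integral_mul_sub_iterate_le hT hρ0 hρ hρi hδ hpi hK hf hc hM j).trans ?_
    have : (j : ℝ) ≤ N := by exact_mod_cast (Finset.mem_range.1 hj).le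
    gcongr
  have h2 : |∫ x, f x * ((N : ℝ)⁻¹ * ∑ j ∈ Finset.range N, ρ (T^[j] x)) ∂μ - ∫ x, f x ∂μ|
      ≤ c * ∫ x, |(N : ℝ)⁻¹ * ∑ j ∈ Finset.range N, ρ (T^[j] x) - 1| ∂μ := by
    rw [← integral_sub ifA hfi, ← integral_const_mul]
    refine abs_integral_le_integral_abs.trans ?_
    refine integral_mono (ifA.sub hfi).abs (iA1.abs.const_mul c) fun x => ?_
    have : f x * ((N : ℝ)⁻¹ * ∑ j ∈ Finset.range N, ρ (T^[j] x)) - f x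
        = f x * ((N : ℝ)⁻¹ * ∑ j ∈ Finset.range N, ρ (T^[j] x) - 1) := by ring
    simp only [this, abs_mul]
    exact mul_le_mul_of_nonneg_right (hc x) (abs_nonneg _)
  exact (abs_sub_le _ _ _).trans (add_le_add h1 h2)

/-- For bounded Lipschitz `ψ`, the asymptotic invariance of `X` in measure becomes invariance of
`ψ ∘ X` in `L¹`. Since `B` may be non-separable, `dist (X (T x)) (X x)` need not be measurable;
`μ` of its superlevel set is then an outer measure, and the set where `ψ ∘ X` varies by more than
`L ε` is used instead. -/
lemma integral_abs_lipschitz_sub_le {Λ : Type} [MeasurableSpace Λ] {μ : Measure Λ}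
    [IsProbabilityMeasure μ] {T : Λ → Λ} (hT : Measurable T)
    {B : Type} [MetricSpace B] [MeasurableSpace B] [BorelSpace B]
    {X : Λ → B} (hX : Measurable X) {ψ : B → ℝ} {L : NNReal} (hL : LipschitzWith L ψ)
    {c : ℝ} (hc : ∀ b, |ψ b| ≤ c) {ε : ℝ} (hε : 0 < ε) :
    ∫ x, |ψ (X (T x)) - ψ (X x)| ∂μ
      ≤ L * ε + 2 * c * (μ {x | ε ≤ dist (X (T x)) (X x)}).toReal := by
  have hψ : Measurable ψ := hL.continuous.measurable
  have hm : Measurable fun x => |ψ (X (T x)) - ψ (X x)| :=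
    ((hψ.comp (hX.comp hT)).sub (hψ.comp hX)).abs
  have hb : ∀ x, |ψ (X (T x)) - ψ (X x)| ≤ 2 * c := fun x =>
    (abs_sub _ _).trans (by linarith [hc (X (T x)), hc (X x)])
  have hc0 : 0 ≤ c := by
    obtain ⟨x⟩ := nonempty_of_isProbabilityMeasure μ
    exact (abs_nonneg _).trans (hc (X x))
  set A : Set Λ := {x | L * ε < |ψ (X (T x)) - ψ (X x)|} with hA
  have hAm : MeasurableSet A := measurableSet_lt measurable_const hm
  have hAsub : A ⊆ {x | ε ≤ dist (X (T x)) (X x)} := fun x hx => by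
    by_contra hlt
    have h1 := hL.dist_le_mul (X (T x)) (X x)
    rw [Real.dist_eq] at h1
    have h2 : (L : ℝ) * dist (X (T x)) (X x) ≤ L * ε :=
      mul_le_mul_of_nonneg_left (not_le.1 hlt).le L.coe_nonneg
    exact absurd hx (not_lt.2 (h1.trans h2))
  have hi : Integrable (fun x => |ψ (X (T x)) - ψ (X x)|) μ :=
    Integrable.of_bound hm.aestronglyMeasurable (2 * c)
      (ae_of_all _ fun x => by simpa using hb x)
  have hind : Integrable (A.indicator fun _ => 2 * c) μ := (integrable_const _).indicator hAm
  calc ∫ x, |ψ (X (T x)) - ψ (X x)| ∂μ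
      ≤ ∫ x, (L * ε + A.indicator (fun _ => 2 * c) x) ∂μ := by
        refine integral_mono hi ((integrable_const _).add hind) fun x => ?_
        by_cases hx : x ∈ A
        · have : 0 ≤ L * ε := by positivity
          simp only [Set.indicator_of_mem hx]
          linarith [hb x]
        · simp only [Set.indicator_of_notMem hx, add_zero]
          exact not_lt.1 hx
    _ = L * ε + 2 * c * (μ A).toReal := by
        rw [integral_add (integrable_const _) hind, integral_indicator_const _ hAm]
        simp [Measure.real, mul_comm]
    _ ≤ _ := by
        gcongr
        exact measure_ne_top _ _

/-- **Strong distributional convergence for families of maps** (Remark `rmk:SDC`).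
Let `(Λ_n, μ_n)` be probability spaces with measure-preserving maps `T_n`,
`λ_n ≪ μ_n` with densities `ρ_n`, `R_n : Λ_n → B` Borel random elements and `R` a
random element of `B`.  Under (S1) `sup_n ∫ ρ_n^{1+δ} dμ_n < ∞`, (S4)
`d_B(R_n∘T_n, R_n) → 0` in `μ_n`-measure, and (S5)
`inf_{N≥1} limsup_n ∫ |(1/N)∑_{j<N} ρ_n∘T_n^j − 1| dμ_n = 0`,
we have `R_n →_{μ_n} R` iff `R_n →_{λ_n} R`. -/
theorem strong_distributional_convergence_map
    (Λ : ℕ → Type) [∀ n, MeasurableSpace (Λ n)]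
    (μ : ∀ n, Measure (Λ n)) (hμ : ∀ n, IsProbabilityMeasure (μ n))
    (T : ∀ n, Λ n → Λ n) (hT_meas : ∀ n, Measurable (T n))
    (hT_inv : ∀ n, Measure.map (T n) (μ n) = μ n)
    (lam : ∀ n, Measure (Λ n)) (hlam : ∀ n, IsProbabilityMeasure (lam n))
    (ρ : ∀ n, Λ n → ℝ) (hρ_nonneg : ∀ n x, 0 ≤ ρ n x) (hρ_meas : ∀ n, Measurable (ρ n))
    (hdensity : ∀ n, lam n = (μ n).withDensity fun x => ENNReal.ofReal (ρ n x))
    (B : Type) [MetricSpace B] [MeasurableSpace B] [BorelSpace B]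
    (R' : ∀ n, Λ n → B) (hR'_meas : ∀ n, Measurable (R' n))
    (Ω₀ : Type) [MeasurableSpace Ω₀] (P : Measure Ω₀) (hP : IsProbabilityMeasure P)
    (R : Ω₀ → B) (hR_meas : Measurable R)
    -- (S1)
    (δ : ℝ) (hδ : 0 < δ)
    (hS1 : ∃ K : ℝ, ∀ n,
      (∫⁻ x, ENNReal.ofReal (ρ n x) ^ (1 + δ) ∂μ n) ≤ ENNReal.ofReal K)
    -- (S4)
    (hS4 : ∀ ε : ℝ, 0 < ε →
      Tendsto (fun n => μ n {x | ε ≤ dist (R' n (T n x)) (R' n x)}) atTop (nhds 0))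
    -- (S5)
    (hS5 : ∀ ε : ℝ, 0 < ε → ∃ N : ℕ, 1 ≤ N ∧ ∀ᶠ n in atTop,
      (∫ x, |(N : ℝ)⁻¹ * ∑ j ∈ Finset.range N, ρ n ((T n)^[j] x) - 1| ∂μ n) ≤ ε) :
    (∀ ψ : B → ℝ, Continuous ψ → (∃ c : ℝ, ∀ b, |ψ b| ≤ c) →
        Tendsto (fun n => ∫ x, ψ (R' n x) ∂μ n) atTop (nhds (∫ ω, ψ (R ω) ∂P))) ↔
      (∀ ψ : B → ℝ, Continuous ψ → (∃ c : ℝ, ∀ b, |ψ b| ≤ c) →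
        Tendsto (fun n => ∫ x, ψ (R' n x) ∂lam n) atTop (nhds (∫ ω, ψ (R ω) ∂P))) := by
  obtain ⟨K, hK⟩ := hS1
  have hT : ∀ n, MeasurePreserving (T n) (μ n) (μ n) := fun n => ⟨hT_meas n, hT_inv n⟩
  have hρi : ∀ n, Integrable (ρ n) (μ n) := fun n => by
    refine ⟨(hρ_meas n).aestronglyMeasurable, ?_⟩
    rw [hasFiniteIntegral_iff_ofReal (ae_of_all _ (hρ_nonneg n))]
    have h1 : lam n Set.univ = 1 := measure_univ
    rw [hdensity n, withDensity_apply _ MeasurableSet.univ, Measure.restrict_univ] at h1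
    simp [h1]
  have hp0 : ∀ n x, 0 ≤ ρ n x ^ (1 + δ) := fun n x => Real.rpow_nonneg (hρ_nonneg n x) _
  have hpl : ∀ n, ∫⁻ x, ENNReal.ofReal (ρ n x ^ (1 + δ)) ∂μ n ≤ ENNReal.ofReal K := fun n => by
    refine le_trans (le_of_eq ?_) (hK n)
    congr 1 with x
    rw [ENNReal.ofReal_rpow_of_nonneg (hρ_nonneg n x) (by linarith)]
  have hpi : ∀ n, Integrable (fun x => ρ n x ^ (1 + δ)) (μ n) := fun n => by
    refine ⟨((hρ_meas n).pow_const _).aestronglyMeasurable, ?_⟩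
    rw [hasFiniteIntegral_iff_ofReal (ae_of_all _ (hp0 n))]
    exact (hpl n).trans_lt ENNReal.ofReal_lt_top
  have hpK : ∀ n, ∫ x, ρ n x ^ (1 + δ) ∂μ n ≤ max K 0 := fun n => by
    rw [integral_eq_lintegral_of_nonneg_ae (ae_of_all _ (hp0 n)) (hpi n).aestronglyMeasurable]
    refine (ENNReal.toReal_mono ENNReal.ofReal_ne_top (hpl n)).trans ?_
    rw [ENNReal.toReal_ofReal']
  have hlam_int : ∀ (ψ : B → ℝ) n, ∫ x, ψ (R' n x) ∂lam n = ∫ x, ψ (R' n x) * ρ n x ∂μ n := by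
    intro ψ n
    rw [hdensity n, integral_withDensity_eq_integral_toReal_smul
      (hρ_meas n).ennreal_ofReal (ae_of_all _ fun x => ENNReal.ofReal_lt_top)]
    congr 1 with x
    rw [ENNReal.toReal_ofReal (hρ_nonneg n x), smul_eq_mul, mul_comm]
  have key : ∀ ψ : B → ℝ, (∃ L, LipschitzWith L ψ) → (∃ c : ℝ, ∀ b, |ψ b| ≤ c) →
      Tendsto (fun n => ∫ x, ψ (R' n x) ∂lam n - ∫ x, ψ (R' n x) ∂μ n) atTop (nhds 0) := by
    rintro ψ ⟨L, hL⟩ ⟨c, hc⟩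
    have hc0 : 0 ≤ c := by
      obtain ⟨x⟩ := nonempty_of_isProbabilityMeasure (μ 0)
      exact (abs_nonneg _).trans (hc (R' 0 x))
    have hψR : ∀ n, Measurable fun x => ψ (R' n x) := fun n =>
      hL.continuous.measurable.comp (hR'_meas n)
    have hL1 : Tendsto (fun n => ∫ x, |ψ (R' n (T n x)) - ψ (R' n x)| ∂μ n) atTop (nhds 0) := by
      rw [Metric.tendsto_nhds]
      intro η hη
      have hε : 0 < η / (2 * ((L : ℝ) + 1)) := by positivity
      have hlim := ((ENNReal.tendsto_toReal ENNReal.zero_ne_top).comp (hS4 _ hε)).const_mul (2 * c)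
      simp only [ENNReal.toReal_zero, mul_zero] at hlim
      filter_upwards [hlim.eventually_lt_const (half_pos hη)] with n hn
      have h1 := integral_abs_lipschitz_sub_le (μ := μ n) (hT_meas n) (hR'_meas n) hL hc hε
      have h2 : (L : ℝ) * (η / (2 * ((L : ℝ) + 1))) ≤ η / 2 := by
        have : (0 : ℝ) ≤ L := L.coe_nonneg
        rw [← mul_div_assoc, div_le_div_iff₀ (by positivity) (by norm_num)]
        nlinarith
      rw [Real.dist_eq, sub_zero, abs_of_nonneg (integral_nonneg fun x => abs_nonneg _)]
      simp only [Function.comp_apply] at hn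
      linarith
    rw [Metric.tendsto_nhds]
    intro η hη
    -- The truncation level `M` is fixed first, then `N`, and only then is `n` sent to infinity.
    obtain ⟨M, hM, hMη⟩ : ∃ M : ℝ, 0 < M ∧ 2 * c * M ^ (-δ) * max K 0 < η / 3 := by
      have h1 : Tendsto (fun M : ℝ => 2 * c * M ^ (-δ) * max K 0) atTop (nhds 0) := by
        simpa using ((tendsto_rpow_neg_atTop hδ).const_mul (2 * c)).mul_const (max K 0)
      obtain ⟨M, h2, h3⟩ :=
        ((h1.eventually_lt_const (by positivity : 0 < η / 3)).and (eventually_gt_atTop 0)).exists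
      exact ⟨M, h3, h2⟩
    obtain ⟨N, hN, hNn⟩ := hS5 (η / (3 * (c + 1))) (by positivity)
    have hlim : Tendsto (fun n => M * (N * ∫ x, |ψ (R' n (T n x)) - ψ (R' n x)| ∂μ n))
        atTop (nhds 0) := by
      simpa using (hL1.const_mul (N : ℝ)).const_mul M
    filter_upwards [hNn, hlim.eventually_lt_const (by positivity : 0 < η / 3)] with n h1 h2
    have h3 := abs_integral_mul_sub_integral_le (hT n) (hρ_nonneg n) (hρ_meas n) (hρi n) hδ
      (hpi n) (hpK n) (hψR n) (fun x => hc _) hM hN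
    have h4 := mul_le_mul_of_nonneg_left h1 hc0
    have h5 : c * (η / (3 * (c + 1))) ≤ η / 3 := by
      rw [← mul_div_assoc, div_le_div_iff₀ (by positivity) (by norm_num)]
      nlinarith
    rw [Real.dist_eq, sub_zero, hlam_int]
    linarith
  constructor
  · intro h
    refine tendsto_integral_of_lipschitz hlam hR'_meas hP hR_meas fun ψ hL hb => ?_
    have hc : Continuous ψ := hL.choose_spec.continuous
    simpa using (key ψ hL hb).add (h ψ hc hb)
  · intro h
    refine tendsto_integral_of_lipschitz hμ hR'_meas hP hR_meas fun ψ hL hb => ?_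
    have hc : Continuous ψ := hL.choose_spec.continuous
    simpa using (h ψ hc hb).sub (key ψ hL hb)
end
end
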